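/- Let d ≥ 3 and let U ⊆ ℂ^{d−1} be a connected component of the interior of the connectedness locus C_d. Assume there exist (c,a) ∈ U, z ∈ ℂ and an integer n ≥ 1 with P_{c,a}^{∘n}(z) = z and |(P_{c,a}^{∘n})'(z)| ≤ 1 (i.e. P_{c,a} has a non-repelling cycle). Then for every (c₀,a₀) in the closure of U, there exist z₀ ∈ ℂ and an integer m ≥ 1 with P_{c₀,a₀}^{∘m}(z₀) = z₀ and |(P_{c₀,a₀}^{∘m})'(z₀)| ≤ 1; in particular every parameter on the boundary of U has a non-repelling periodic point. -/

import Mathlib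

open Filter Topology MeasureTheory

/-- Elementary symmetric polynomial of degree `m` in the values of `c`. -/
noncomputable def sigmaE {n : ℕ} (c : Fin n → ℂ) (m : ℕ) : ℂ :=
  (Multiset.map c Finset.univ.val).esymm m

/-- The polynomial `P_{c,a}`. -/
noncomputable def Pca (d : ℕ) (c : Fin (d - 2) → ℂ) (a : ℂ) (z : ℂ) : ℂ :=
  z ^ d / (d : ℂ) +
    (∑ j ∈ Finset.Icc 2 (d - 1), (-1 : ℂ) ^ (d - j) * sigmaE c (d - j) * z ^ j / (j : ℂ)) +
    a ^ d

/-- The critical points `c₀ = 0, c₁, …, c_{d-2}` of `P_{c,a}`. -/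
noncomputable def critPt {d : ℕ} (c : Fin (d - 2) → ℂ) (i : Fin (d - 1)) : ℂ :=
  if h : (i : ℕ) = 0 then 0 else c ⟨(i : ℕ) - 1, by have := i.isLt; omega⟩

/-- The orbit of `z` under `P_{c,a}` is bounded. -/
def boundedOrbit (d : ℕ) (c : Fin (d - 2) → ℂ) (a z : ℂ) : Prop :=
  Bornology.IsBounded (Set.range fun n => (Pca d c a)^[n] z)

/-- The Green function of `P_{c,a}`. -/
noncomputable def green (d : ℕ) (c : Fin (d - 2) → ℂ) (a z : ℂ) : ℝ :=
  limUnder atTop (fun n : ℕ => Real.log (max 1 ‖(Pca d c a)^[n] z‖) / (d : ℝ) ^ n)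

/-- `G(c,a)`, the max of the Green function over the critical points. -/
noncomputable def Gmax (d : ℕ) (c : Fin (d - 2) → ℂ) (a : ℂ) : ℝ :=
  ⨆ i : Fin (d - 1), green d c a (critPt c i)

/-- The connectedness locus `C_d`. -/
def connLocus (d : ℕ) : Set ((Fin (d - 2) → ℂ) × ℂ) :=
  {p | ∀ i : Fin (d - 1), boundedOrbit d p.1 p.2 (critPt p.1 i)}

/-- The filled-in Julia set of `P_{c,a}`. -/
def filledJulia (d : ℕ) (c : Fin (d - 2) → ℂ) (a : ℂ) : Set ℂ :=
  {z | boundedOrbit d c a z}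

/-!
Fixed points of `P^n` with multiplier at most `1` in modulus exist on a closed set of parameters, so
by connectedness of `U` it is enough that this set is open in the interior of the connectedness
locus. There the critical orbits stay in a disc of locally constant radius, and it suffices to
propagate such a fixed point along a complex line in a small ball.

The multipliers are the zeros `l` of the resultant of `P^n(z) - z` and `(P^n)'(z) - l`. If none on
the line has modulus below `1`, Hurwitz's theorem in `l` makes the given neutral multiplier persist;
if all those of modulus below `1` vanish, then the multiplier `0` persists. Otherwise some
multiplier `l` has `0 < |l| < 1`, and for all nearby parameters a critical point `γ` has an orbit
`x_m = P^{nm}(γ)` which converges to a fixed point without landing on it, for otherwise inverse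
branches of iterates of `P^n` around that point would have derivatives `l^{-m}` and yet be uniformly
bounded. The functions `x_{m+1} - x_m` of the parameter are holomorphic and uniformly bounded, so by
Vitali's theorem they tend to `0` on the whole line. Where every fixed point of `P^n` is repelling
this forces `x_{m+1} = x_m` for some `m`, which by Baire's theorem fails for a dense set of
parameters. As the parameters with only repelling fixed points form an open set, there are none.
-/

section

open Polynomial Set Metric

section HolomorphicLift

theorem exists_analyticAt_localInverse {f : ℂ → ℂ} {x : ℂ} (hf : AnalyticAt ℂ f x)
    (hf' : deriv f x ≠ 0) :
    ∃ φ : ℂ → ℂ, AnalyticAt ℂ φ (f x) ∧ HasDerivAt φ (deriv f x)⁻¹ (f x) ∧ φ (f x) = x ∧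
      (∀ᶠ y in 𝓝 x, φ (f y) = y) ∧ ∀ᶠ y in 𝓝 (f x), f (φ y) = y :=
  have hd := hf.hasStrictDerivAt
  ⟨hd.localInverse _ _ _ hf', hf.analyticAt_localInverse hf', (hd.to_localInverse hf').hasDerivAt,
    HasStrictFDerivAt.localInverse_apply_image (hd.hasStrictFDerivAt_equiv hf'),
    hd.eventually_left_inverse hf', hd.eventually_right_inverse hf'⟩

theorem differentiableAt_of_comp {f e S : ℂ → ℂ} {w : ℂ} (hf : AnalyticAt ℂ f (S w))
    (hf' : deriv f (S w) ≠ 0) (hS : ContinuousAt S w) (he : DifferentiableAt ℂ e w)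
    (hfS : f ∘ S =ᶠ[𝓝 w] e) : DifferentiableAt ℂ S w := by
  obtain ⟨φ, hφ, -, -, hφf, -⟩ := exists_analyticAt_localInverse hf hf'
  have hS_eq : S =ᶠ[𝓝 w] φ ∘ e := by
    filter_upwards [hS.eventually hφf, hfS] with v hv hev
    rw [Function.comp_apply, ← hev, Function.comp_apply, hv]
  have hφ_at : AnalyticAt ℂ φ (e w) := by rwa [← hfS.eq_of_nhds]
  exact (hφ_at.differentiableAt.comp w he).congr_of_eventuallyEq hS_eq

theorem eqOn_of_comp_eqOn {f S T : ℂ → ℂ} {H : Set ℂ} (hH : IsOpen H) (hHc : IsPreconnected H)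
    (hS : DifferentiableOn ℂ S H) (hT : DifferentiableOn ℂ T H) {w₀ : ℂ} (hw₀ : w₀ ∈ H)
    (hST : S w₀ = T w₀) (hf : AnalyticAt ℂ f (S w₀)) (hf' : deriv f (S w₀) ≠ 0)
    (hfST : EqOn (f ∘ S) (f ∘ T) H) : EqOn S T H := by
  obtain ⟨φ, -, -, -, hφ, -⟩ := exists_analyticAt_localInverse hf hf'
  have hH₀ := hH.mem_nhds hw₀
  refine (hS.analyticOnNhd hH).eqOn_of_preconnected_of_eventuallyEq (hT.analyticOnNhd hH) hHc hw₀ ?_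
  filter_upwards [(hS.differentiableAt hH₀).continuousAt.eventually hφ,
    (hT.differentiableAt hH₀).continuousAt.eventually (hST ▸ hφ), hH₀] with w hSw hTw hw
  rw [← hSw, ← hTw]
  exact congrArg φ (hfST hw)

theorem exists_holomorphic_lift (G : ℂ[X]) {H : Set ℂ} (hH : IsOpen H) (hHc : Convex ℝ H)
    {e : ℂ → ℂ} (he : DifferentiableOn ℂ e H)
    (hcrit : ∀ w ∈ H, ∀ x, G.derivative.eval x = 0 → G.eval x ≠ e w)
    {w₀ : ℂ} (hw₀ : w₀ ∈ H) {x₀ : ℂ} (hx₀ : G.eval x₀ = e w₀) :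
    ∃ S : ℂ → ℂ, DifferentiableOn ℂ S H ∧ S w₀ = x₀ ∧ ∀ w ∈ H, G.eval (S w) = e w := by
  have := hHc.contractibleSpace ⟨w₀, hw₀⟩
  have := hH.locallyPathConnectedSpace
  obtain ⟨s, ⟨hs₀, hs⟩, -⟩ := G.isCoveringMapOn_eval.existsUnique_continuousMap_lifts
    (⟨H.domRestrict e, he.continuousOn.domRestrict⟩ : C(H, ℂ)) (a₀ := ⟨w₀, hw₀⟩) (e₀ := x₀) hx₀
    (fun w ⟨x, hx, hxe⟩ => hcrit w w.2 x hx hxe)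
  classical
  let S : ℂ → ℂ := fun w => if h : w ∈ H then s ⟨w, h⟩ else 0
  have hS (w : ℂ) (hw : w ∈ H) : S w = s ⟨w, hw⟩ := dif_pos hw
  have hGS (w : ℂ) (hw : w ∈ H) : G.eval (S w) = e w := by
    rw [hS w hw]
    exact congrFun hs ⟨w, hw⟩
  have hS_cont : ContinuousOn S H := by
    rw [continuousOn_iff_continuous_domRestrict]
    exact s.continuous.congr fun w => (hS w w.2).symm
  refine ⟨S, fun w hw => ?_, (hS w₀ hw₀).trans hs₀, hGS⟩
  have hHw := hH.mem_nhds hw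
  refine (differentiableAt_of_comp (f := G.eval) (G.differentiable.analyticAt (S w)) ?_
    (hS_cont.continuousAt hHw) (he.differentiableAt hHw)
    (eventually_of_mem hHw hGS)).differentiableWithinAt
  rw [G.deriv]
  exact fun h => hcrit w hw _ h (hGS w hw)

theorem norm_le_of_tendsto_mul_exp {S : ℂ → ℂ} {M : ℝ} {a : ℂ}
    (hS : DifferentiableOn ℂ S {w | 0 < w.re}) (hM : ∀ w : ℂ, 0 < w.re → ‖S w‖ ≤ M)
    (ha : Tendsto (fun x : ℝ => S x * Complex.exp x) atTop (𝓝 a)) : ‖a‖ ≤ M := by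
  have hH : IsOpen {w : ℂ | 0 < w.re} := isOpen_lt continuous_const Complex.continuous_re
  have hshift (δ : ℝ) (hδ : 0 < δ) : ‖a * Complex.exp (-δ)‖ ≤ M := by
    let F : ℂ → ℂ := fun w => S (w + δ) * Complex.exp w
    have hre {w : ℂ} (hw : 0 ≤ w.re) : 0 < (w + δ).re := by
      simpa using add_pos_of_nonneg_of_pos hw hδ
    have hF_norm (w : ℂ) (hw : 0 ≤ w.re) : ‖F w‖ ≤ M * Real.exp w.re := by
      rw [norm_mul, Complex.norm_exp]
      gcongr
      exact hM _ (hre hw)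
    have hF_lim : Tendsto (fun x : ℝ => F x) atTop (𝓝 (a * Complex.exp (-δ))) := by
      have ha' := ha.comp (tendsto_atTop_add_const_right _ δ tendsto_id)
      refine (ha'.mul_const (Complex.exp (-δ))).congr fun x => ?_
      simp only [F, Function.comp_apply, id_eq, Complex.ofReal_add, mul_assoc, ← Complex.exp_add,
        add_neg_cancel_right]
    have hF_diff : DiffContOnCl ℂ F {w | 0 < w.re} := by
      refine DifferentiableOn.diffContOnCl fun w hw => ?_
      rw [Complex.closure_setOfPred_lt_re] at hw
      have hSw : DifferentiableAt ℂ S (w + δ) := hS.differentiableAt (hH.mem_nhds (hre hw))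
      have : DifferentiableAt ℂ (fun w => S (w + δ)) w :=
        hSw.comp w (differentiableAt_id.add_const _)
      exact (this.mul Complex.differentiable_exp.differentiableAt).differentiableWithinAt
    have hF_growth : F =O[Bornology.cobounded ℂ ⊓ 𝓟 {w | 0 < w.re}]
        fun w => Real.exp (1 * ‖w‖ ^ (1 : ℝ)) := by
      refine Asymptotics.IsBigO.of_bound M (eventually_inf_principal.2 (.of_forall fun w hw => ?_))
      have hM₀ : 0 ≤ M := (norm_nonneg _).trans (hM w hw)
      refine (hF_norm w hw.le).trans ?_
      rw [one_mul, Real.rpow_one, Real.norm_eq_abs, Real.abs_exp]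
      gcongr
      exact Complex.re_le_norm w
    refine le_of_tendsto hF_lim.norm ((eventually_ge_atTop 0).mono fun x hx => ?_)
    refine PhragmenLindelof.right_half_plane_of_bounded_on_real hF_diff
      ⟨1, one_lt_two, 1, hF_growth⟩ hF_lim.norm.isBoundedUnder_le (fun x => ?_) (by simpa using hx)
    simpa using hF_norm (x * Complex.I) (by simp)
  have hlim : Tendsto (fun δ : ℝ => ‖a * Complex.exp (-δ)‖) (𝓝[>] 0) (𝓝 ‖a‖) := by
    refine Tendsto.mono_left (Continuous.tendsto' ?_ _ _ ?_) nhdsWithin_le_nhds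
    · fun_prop
    · simp
  exact le_of_tendsto hlim (eventually_mem_nhdsWithin.mono hshift)

end HolomorphicLift

/-- The universal covering map `w ↦ c + r e^{-w}` from the right half-plane onto the disc of
centre `c` and radius `r` punctured at `c`. -/
noncomputable def puncturedDiscCover (c : ℂ) (r : ℝ) (w : ℂ) : ℂ :=
  c + r * Complex.exp (-w)

section puncturedDiscCover

variable {c : ℂ} {r : ℝ}

theorem norm_puncturedDiscCover_sub (hr : 0 < r) (w : ℂ) :
    ‖puncturedDiscCover c r w - c‖ = r * Real.exp (-w.re) := by
  simp [puncturedDiscCover, Complex.norm_exp, abs_of_pos hr]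

theorem puncturedDiscCover_ne (hr : 0 < r) (w : ℂ) : puncturedDiscCover c r w ≠ c := by
  rw [← sub_ne_zero, ← norm_pos_iff, norm_puncturedDiscCover_sub hr]
  positivity

theorem norm_puncturedDiscCover_sub_lt (hr : 0 < r) {w : ℂ} (hw : 0 < w.re) :
    ‖puncturedDiscCover c r w - c‖ < r := by
  rw [norm_puncturedDiscCover_sub hr]
  exact mul_lt_of_lt_one_right hr (Real.exp_lt_one_iff.2 (neg_neg_of_pos hw))

theorem differentiable_puncturedDiscCover : Differentiable ℂ (puncturedDiscCover c r) := by
  unfold puncturedDiscCover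
  fun_prop

theorem tendsto_puncturedDiscCover (hr : 0 < r) :
    Tendsto (puncturedDiscCover c r) (comap Complex.re atTop) (𝓝[≠] c) := by
  refine tendsto_nhdsWithin_iff.2 ⟨?_, .of_forall (puncturedDiscCover_ne hr)⟩
  rw [tendsto_iff_norm_sub_tendsto_zero]
  simp only [norm_puncturedDiscCover_sub hr]
  simpa using (Real.tendsto_exp_neg_atTop_nhds_zero.comp tendsto_comap).const_mul r

theorem tendsto_comp_puncturedDiscCover_sub_mul_exp (hr : 0 < r) {φ : ℂ → ℂ} {φ' : ℂ}
    (hφ : HasDerivAt φ φ' c) :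
    Tendsto (fun w => (φ (puncturedDiscCover c r w) - φ c) * Complex.exp w)
      (comap Complex.re atTop) (𝓝 (r * φ')) := by
  refine (((hasDerivAt_iff_tendsto_slope.1 hφ).comp (tendsto_puncturedDiscCover hr)).const_mul
    (r : ℂ)).congr fun w => ?_
  have hsub : puncturedDiscCover c r w - c = r / Complex.exp w := by
    rw [puncturedDiscCover, Complex.exp_neg, add_sub_cancel_left, div_eq_mul_inv]
  have hrc : (r : ℂ) ≠ 0 := Complex.ofReal_ne_zero.2 hr.ne'
  have hexp := Complex.exp_ne_zero w
  simp only [Function.comp_apply, slope_def_field, hsub]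
  field_simp

end puncturedDiscCover

section InverseBranch

variable {G : ℂ[X]} {z : ℂ} {r : ℝ}

theorem exists_lift_puncturedDiscCover (hr : 0 < r) (hz : G.derivative.eval z ≠ 0)
    (hcrit : ∀ x, G.derivative.eval x = 0 → G.eval x = G.eval z ∨ r ≤ ‖G.eval x - G.eval z‖) :
    ∃ S : ℂ → ℂ, DifferentiableOn ℂ S {w | 0 < w.re} ∧
      (∀ w : ℂ, 0 < w.re → G.eval (S w) = puncturedDiscCover (G.eval z) r w) ∧
      Tendsto (fun w => (S w - z) * Complex.exp w) (comap Complex.re atTop)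
        (𝓝 (r * (G.derivative.eval z)⁻¹)) := by
  set e := puncturedDiscCover (G.eval z) r
  have he : Differentiable ℂ e := differentiable_puncturedDiscCover
  have hcrit' (w : ℂ) (hw : 0 < w.re) (x : ℂ) (hx : G.derivative.eval x = 0) : G.eval x ≠ e w :=
    fun h => (hcrit x hx).elim (fun h' => puncturedDiscCover_ne hr w (h ▸ h'))
      fun h' => (norm_puncturedDiscCover_sub_lt hr hw).not_ge (h ▸ h')
  obtain ⟨φ, hφ, hφ', hφz, -, hGφ⟩ :=
    exists_analyticAt_localInverse (G.differentiable.analyticAt z) (G.deriv.trans_ne hz)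
  obtain ⟨L, hL⟩ : ∃ L, ∀ w : ℂ, L < w.re → AnalyticAt ℂ φ (e w) ∧ G.eval (φ (e w)) = e w := by
    have hev := ((tendsto_puncturedDiscCover hr).mono_right nhdsWithin_le_nhds).eventually
      (hφ.eventually_analyticAt.and hGφ)
    obtain ⟨L, hL⟩ := eventually_atTop.1 (eventually_comap.1 hev)
    exact ⟨L, fun w hw => hL _ hw.le w rfl⟩
  have hH (b : ℝ) : IsOpen {w : ℂ | b < w.re} := isOpen_lt continuous_const Complex.continuous_re
  have hre {w : ℂ} (hw : max L 0 < w.re) : L < w.re ∧ 0 < w.re := max_lt_iff.1 hw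
  let w₀ : ℂ := (max L 0 + 1 : ℝ)
  have hw₀ : max L 0 < w₀.re := by simp [w₀]
  obtain ⟨S, hS, hS₀, hGS⟩ := exists_holomorphic_lift G (hH 0) (convex_halfSpace_re_gt 0)
    he.differentiableOn hcrit' (hre hw₀).2 (hL w₀ (hre hw₀).1).2
  have hSφ : EqOn S (φ ∘ e) {w | max L 0 < w.re} := by
    refine eqOn_of_comp_eqOn (f := G.eval) (hH _) (convex_halfSpace_re_gt _).isPreconnected
      (hS.mono fun w hw => (hre hw).2) (fun w hw => ?_) hw₀ hS₀ (G.differentiable.analyticAt _)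
      (G.deriv.trans_ne fun h => hcrit' w₀ (hre hw₀).2 _ h (hGS w₀ (hre hw₀).2))
      fun w hw => (hGS w (hre hw).2).trans (hL w (hre hw).1).2.symm
    exact ((hL w (hre hw).1).1.differentiableAt.comp w he.differentiableAt).differentiableWithinAt
  refine ⟨S, hS, hGS, ?_⟩
  rw [G.deriv] at hφ'
  refine (tendsto_comp_puncturedDiscCover_sub_mul_exp hr hφ').congr' ?_
  filter_upwards [preimage_mem_comap (Ioi_mem_atTop (max L 0))] with w hw
  rw [hφz, hSφ hw, Function.comp_apply]

theorem radius_le_mul_norm_eval_derivative (hr : 0 < r) (hz : G.derivative.eval z ≠ 0)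
    (hcrit : ∀ x, G.derivative.eval x = 0 → G.eval x = G.eval z ∨ r ≤ ‖G.eval x - G.eval z‖)
    {M : ℝ} (hM : ∀ x, ‖G.eval x - G.eval z‖ < r → ‖x - z‖ ≤ M) :
    r ≤ M * ‖G.derivative.eval z‖ := by
  obtain ⟨S, hS, hGS, hS_lim⟩ := exists_lift_puncturedDiscCover hr hz hcrit
  have hS_norm (w : ℂ) (hw : 0 < w.re) : ‖S w - z‖ ≤ M := by
    refine hM _ ?_
    rw [hGS w hw]
    exact norm_puncturedDiscCover_sub_lt hr hw
  have hre : Tendsto (fun x : ℝ => (x : ℂ)) atTop (comap Complex.re atTop) :=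
    tendsto_comap_iff.2 tendsto_id
  have hle := norm_le_of_tendsto_mul_exp (hS.sub_const z) hS_norm (hS_lim.comp hre)
  rwa [norm_mul, norm_inv, Complex.norm_of_nonneg hr.le, ← div_eq_mul_inv,
    div_le_iff₀ (norm_pos_iff.2 hz)] at hle

end InverseBranch

/-- The `n`-th iterate of a polynomial under composition, again as a polynomial. -/
noncomputable def iterComp {A : Type*} [CommSemiring A] (p : A[X]) (n : ℕ) : A[X] :=
  p.comp^[n] X

section iterComp

variable {A : Type*} [CommSemiring A] (p : A[X]) (n : ℕ)

theorem iterComp_succ : iterComp p (n + 1) = p.comp (iterComp p n) :=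
  Function.iterate_succ_apply' _ _ _

theorem eval_iterComp (x : A) : (iterComp p n).eval x = p.eval^[n] x := by
  simp [iterComp, iterate_comp_eval]

theorem natDegree_iterComp [NoZeroDivisors A] [Nontrivial A] :
    (iterComp p n).natDegree = p.natDegree ^ n := by
  simp [iterComp, natDegree_iterate_comp]

theorem eval_derivative_iterComp (x : A) :
    (iterComp p n).derivative.eval x = ∏ j ∈ Finset.range n, p.derivative.eval (p.eval^[j] x) := by
  induction n with
  | zero => simp [iterComp]
  | succ n ih =>
    rw [iterComp_succ, derivative_comp, eval_mul, ih, Finset.prod_range_succ, eval_comp,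
      eval_iterComp, mul_comm]

theorem eval_derivative_iterComp_eq_zero [NoZeroDivisors A] [Nontrivial A] {x : A} :
    (iterComp p n).derivative.eval x = 0 ↔ ∃ j < n, p.derivative.eval (p.eval^[j] x) = 0 := by
  simp only [eval_derivative_iterComp, Finset.prod_eq_zero_iff, Finset.mem_range]

end iterComp

theorem deriv_iterate_eval (p : ℂ[X]) (n : ℕ) (z : ℂ) :
    deriv (p.eval^[n]) z = (iterComp p n).derivative.eval z := by
  rw [← funext (eval_iterComp p n), Polynomial.deriv]

/-- `R` is an escape radius of `f`: outside the closed ball of radius `R` about the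
origin, the map `f` at least doubles norms. -/
structure IsEscapeRadius {E : Type*} [NormedAddCommGroup E] (f : E → E) (R : ℝ) : Prop where
  nonneg : 0 ≤ R
  two_mul_norm_le : ∀ z, R < ‖z‖ → 2 * ‖z‖ ≤ ‖f z‖

namespace IsEscapeRadius

variable {E : Type*} [NormedAddCommGroup E] {f : E → E} {R : ℝ} {z : E}

theorem two_pow_mul_norm_le (hR : IsEscapeRadius f R) (hz : R < ‖z‖) (n : ℕ) :
    2 ^ n * ‖z‖ ≤ ‖f^[n] z‖ := by
  induction n with
  | zero => simp
  | succ n ih =>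
    have hn : R < ‖f^[n] z‖ :=
      hz.trans_le ((le_mul_of_one_le_left (norm_nonneg z) (one_le_pow₀ one_le_two)).trans ih)
    rw [Function.iterate_succ_apply', pow_succ', mul_assoc]
    exact (mul_le_mul_of_nonneg_left ih zero_le_two).trans (hR.two_mul_norm_le _ hn)

theorem mono (hR : IsEscapeRadius f R) {R' : ℝ} (hRR' : R ≤ R') : IsEscapeRadius f R' :=
  ⟨hR.nonneg.trans hRR', fun z hz => hR.two_mul_norm_le z (hRR'.trans_lt hz)⟩

theorem iterate (hR : IsEscapeRadius f R) {n : ℕ} (hn : n ≠ 0) : IsEscapeRadius f^[n] R where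
  nonneg := hR.nonneg
  two_mul_norm_le z hz :=
    (mul_le_mul_of_nonneg_right (le_self_pow₀ one_le_two hn) (norm_nonneg z)).trans
      (hR.two_pow_mul_norm_le hz n)

theorem norm_iterate_le (hR : IsEscapeRadius f R)
    (hz : Bornology.IsBounded (range fun n => f^[n] z)) (n : ℕ) : ‖f^[n] z‖ ≤ R := by
  by_contra! hn
  obtain ⟨C, hC⟩ := hz.exists_norm_le
  have hpos : 0 < ‖f^[n] z‖ := hR.nonneg.trans_lt hn
  obtain ⟨k, hk⟩ := pow_unbounded_of_one_lt (C / ‖f^[n] z‖) one_lt_two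
  have hgrow := hR.two_pow_mul_norm_le hn k
  rw [← Function.iterate_add_apply] at hgrow
  exact ((div_lt_iff₀ hpos).1 hk).not_ge (hgrow.trans (hC _ (mem_range_self (k + n))))

theorem norm_le_max_norm_iterate (hR : IsEscapeRadius f R) (z : E) (n : ℕ) :
    ‖z‖ ≤ max R ‖f^[n] z‖ := by
  rcases le_or_gt ‖z‖ R with hz | hz
  · exact hz.trans (le_max_left _ _)
  · exact ((le_mul_of_one_le_left (norm_nonneg z) (one_le_pow₀ one_le_two)).trans
      (hR.two_pow_mul_norm_le hz n)).trans (le_max_right _ _)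

end IsEscapeRadius

section AttractingFixedPoint

theorem eventually_norm_sub_le_mul {𝕜 : Type*} [NontriviallyNormedField 𝕜] {f : 𝕜 → 𝕜} {z ρ : 𝕜}
    (hf : HasDerivAt f ρ z) {q : ℝ} (hq : ‖ρ‖ < q) :
    ∀ᶠ w in 𝓝 z, ‖f w - f z‖ ≤ q * ‖w - z‖ := by
  refine (hf.isLittleO.bound (sub_pos.2 hq)).mono fun w hw => ?_
  have hsplit : f w - f z = (f w - f z - (w - z) • ρ) + (w - z) • ρ := (sub_add_cancel _ _).symm
  calc ‖f w - f z‖ ≤ ‖f w - f z - (w - z) • ρ‖ + ‖(w - z) • ρ‖ := by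
        rw [hsplit, add_sub_cancel_right]
        exact norm_add_le _ _
    _ ≤ (q - ‖ρ‖) * ‖w - z‖ + ‖w - z‖ * ‖ρ‖ := by rw [norm_smul]; gcongr
    _ = q * ‖w - z‖ := by ring

theorem eventually_tendsto_iterate_and_ne {𝕜 : Type*} [NontriviallyNormedField 𝕜] {f : 𝕜 → 𝕜}
    {z ρ : 𝕜} (hf : HasDerivAt f ρ z) (hz : f z = z) (hρ₀ : ρ ≠ 0) (hρ₁ : ‖ρ‖ < 1) :
    ∀ᶠ w in 𝓝[≠] z, Tendsto (fun m => f^[m] w) atTop (𝓝 z) ∧ ∀ m, f^[m] w ≠ z := by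
  obtain ⟨q, hρq, hq⟩ := exists_between hρ₁
  have hq₀ : 0 ≤ q := (norm_nonneg ρ).trans hρq.le
  have hlocal : ∀ᶠ w in 𝓝[≠] z, ‖f w - z‖ ≤ q * ‖w - z‖ ∧ f w ≠ z := by
    have hle := eventually_norm_sub_le_mul hf hρq
    rw [hz] at hle
    exact (hle.filter_mono nhdsWithin_le_nhds).and (hf.eventually_ne hρ₀)
  obtain ⟨r, hr, hball⟩ := Metric.eventually_nhds_iff.1 (eventually_nhdsWithin_iff.1 hlocal)
  filter_upwards [self_mem_nhdsWithin, nhdsWithin_le_nhds (ball_mem_nhds z hr)] with w hwz hwr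
  rw [mem_ball, dist_eq_norm] at hwr
  have horbit (m : ℕ) : f^[m] w ≠ z ∧ ‖f^[m] w - z‖ ≤ q ^ m * ‖w - z‖ := by
    induction m with
    | zero => simpa using hwz
    | succ m ih =>
      have hlt : ‖f^[m] w - z‖ < r :=
        (ih.2.trans (mul_le_of_le_one_left (norm_nonneg _) (pow_le_one₀ hq₀ hq.le))).trans_lt hwr
      obtain ⟨hle, hne⟩ := hball ((dist_eq_norm _ _).trans_lt hlt) ih.1
      rw [Function.iterate_succ_apply', pow_succ', mul_assoc]
      exact ⟨hne, hle.trans (mul_le_mul_of_nonneg_left ih.2 hq₀)⟩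
  refine ⟨tendsto_iff_norm_sub_tendsto_zero.2 ?_, fun m => (horbit m).1⟩
  refine squeeze_zero (fun _ => norm_nonneg _) (fun m => (horbit m).2) ?_
  simpa using (tendsto_pow_atTop_nhds_zero_of_lt_one hq₀ hq).mul_const ‖w - z‖

theorem eval_derivative_iterComp_of_isFixedPt {A : Type*} [CommSemiring A] {p : A[X]} {z : A}
    (hz : p.eval z = z) (k : ℕ) :
    (iterComp p k).derivative.eval z = p.derivative.eval z ^ k := by
  have hiter (j : ℕ) : p.eval^[j] z = z := Function.iterate_fixed hz j
  simp only [eval_derivative_iterComp, hiter, Finset.prod_const, Finset.card_range]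

/- If no critical point is attracted, then all iterates of `p` have an inverse branch on a common
punctured disc about `z`, and their multipliers `ρ ^ k` are bounded away from `0`. -/
theorem exists_critical_tendsto_attracting {p : ℂ[X]} {R : ℝ} (hR : IsEscapeRadius p.eval R)
    {z : ℂ} (hz : p.eval z = z) (hρ₀ : p.derivative.eval z ≠ 0)
    (hρ₁ : ‖p.derivative.eval z‖ < 1) :
    ∃ c, p.derivative.eval c = 0 ∧ Tendsto (fun m => p.eval^[m] c) atTop (𝓝 z) ∧
      ∀ m, p.eval^[m] c ≠ z := by
  have hbasin := eventually_tendsto_iterate_and_ne (p.hasDerivAt z) hz hρ₀ hρ₁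
  obtain ⟨r, hr, hball⟩ := Metric.eventually_nhds_iff.1 (eventually_nhdsWithin_iff.1 hbasin)
  have hiter (k : ℕ) : p.eval^[k] z = z := Function.iterate_fixed hz k
  by_contra! hcrit
  have hcritical_value (k : ℕ) (x : ℂ) (hx : (iterComp p k).derivative.eval x = 0) :
      (iterComp p k).eval x = (iterComp p k).eval z ∨
        r ≤ ‖(iterComp p k).eval x - (iterComp p k).eval z‖ := by
    obtain ⟨j, hj, hc⟩ := (eval_derivative_iterComp_eq_zero p k).1 hx
    rw [eval_iterComp, eval_iterComp, hiter]
    by_contra! hk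
    obtain ⟨hlim, hne⟩ := hball ((dist_eq_norm _ _).trans_lt hk.2) hk.1
    have hshift (m : ℕ) : p.eval^[m] (p.eval^[k] x) = p.eval^[m + (k - j)] (p.eval^[j] x) := by
      rw [← Function.iterate_add_apply, ← Function.iterate_add_apply, add_assoc,
        Nat.sub_add_cancel hj.le]
    simp only [hshift] at hlim hne
    obtain ⟨m, hm⟩ := hcrit _ hc ((tendsto_add_atTop_iff_nat (k - j)).1 hlim)
    apply hne m
    rw [add_comm, Function.iterate_add_apply, hm, hiter]
  have hpreimage (k : ℕ) (x : ℂ)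
      (hx : ‖(iterComp p k).eval x - (iterComp p k).eval z‖ < r) :
      ‖x - z‖ ≤ max R (‖z‖ + r) + ‖z‖ := by
    rw [eval_iterComp, eval_iterComp, hiter] at hx
    have hx' : ‖p.eval^[k] x‖ ≤ ‖z‖ + r := by linarith [norm_sub_norm_le (p.eval^[k] x) z]
    have hx_norm := (hR.norm_le_max_norm_iterate x k).trans (max_le_max_left R hx')
    exact (norm_sub_le x z).trans (add_le_add_left hx_norm _)
  have hbound (k : ℕ) :
      r ≤ (max R (‖z‖ + r) + ‖z‖) * ‖p.derivative.eval z‖ ^ k := by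
    rw [← norm_pow, ← eval_derivative_iterComp_of_isFixedPt hz]
    refine radius_le_mul_norm_eval_derivative hr ?_ (hcritical_value k) (hpreimage k)
    rw [eval_derivative_iterComp_of_isFixedPt hz]
    exact pow_ne_zero k hρ₀
  have hlim := (tendsto_pow_atTop_nhds_zero_of_lt_one (norm_nonneg _) hρ₁).const_mul
    (max R (‖z‖ + r) + ‖z‖)
  rw [mul_zero] at hlim
  exact hr.not_ge (ge_of_tendsto' hlim hbound)

theorem exists_critical_tendsto_attracting_cycle {p : ℂ[X]} {R : ℝ} (hR : IsEscapeRadius p.eval R)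
    {n : ℕ} (hn : n ≠ 0) {z : ℂ} (hz : (iterComp p n).eval z = z)
    (hρ₀ : (iterComp p n).derivative.eval z ≠ 0) (hρ₁ : ‖(iterComp p n).derivative.eval z‖ < 1) :
    ∃ c, p.derivative.eval c = 0 ∧
      (∃ y, Tendsto (fun m => (iterComp p n).eval^[m] c) atTop (𝓝 y)) ∧
      ∀ m, (iterComp p n).eval^[m + 1] c ≠ (iterComp p n).eval^[m] c := by
  set g := (iterComp p n).eval
  have hgp : g = p.eval^[n] := funext (eval_iterComp p n)
  have hgR : IsEscapeRadius g R := hgp ▸ hR.iterate hn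
  obtain ⟨x, hx, hlim, hne⟩ := exists_critical_tendsto_attracting hgR hz hρ₀ hρ₁
  obtain ⟨j, hj, hc⟩ := (eval_derivative_iterComp_eq_zero p n).1 hx
  have hcomm (m : ℕ) : g^[m] (p.eval^[j] x) = p.eval^[j] (g^[m] x) := by
    rw [hgp, ← Function.iterate_mul]
    exact (Function.Commute.iterate_iterate_self _ _ _).eq x
  have hreturn (m : ℕ) : p.eval^[n - j] (g^[m] (p.eval^[j] x)) = g^[m + 1] x := by
    rw [hcomm, ← Function.iterate_add_apply, Nat.sub_add_cancel hj.le, ← hgp,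
      Function.iterate_succ_apply']
  refine ⟨_, hc, ⟨p.eval^[j] z, ?_⟩, fun m hm => hne (m + 1) ?_⟩
  · simp only [hcomm]
    exact ((p.continuous.iterate j).tendsto z).comp hlim
  · have hfix : Function.IsFixedPt g (g^[m + 1] x) := by
      rw [Function.IsFixedPt, ← Function.iterate_succ_apply' g, ← hreturn, hm, hreturn]
    refine tendsto_nhds_unique (tendsto_const_nhds.congr fun l => ?_)
      ((tendsto_add_atTop_iff_nat (m + 1)).2 hlim)
    exact (hfix.iterate l).eq.symm.trans (Function.iterate_add_apply g l (m + 1) x).symm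

end AttractingFixedPoint

section BoundedFamilies

theorem equicontinuousAt_of_differentiableOn_of_norm_le {ι : Type*} {F : ι → ℂ → ℂ} {x : ℂ}
    {r M : ℝ} (hr : 0 < r) (hF : ∀ i, DifferentiableOn ℂ (F i) (ball x r))
    (hM : ∀ i, ∀ y ∈ ball x r, ‖F i y‖ ≤ M) : EquicontinuousAt F x := by
  refine equicontinuousAt_of_continuity_modulus (fun y => (M + M) / r * dist y x)
    (Continuous.tendsto' (by fun_prop) _ _ (by simp)) F ?_
  filter_upwards [ball_mem_nhds x hr] with y hy i
  rw [dist_comm]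
  refine Complex.dist_le_div_mul_dist_of_mapsTo_ball (hF i) (fun w hw => ?_) hy
  exact mem_closedBall_iff_norm.2
    ((norm_sub_le _ _).trans (add_le_add (hM i w hw) (hM i x (mem_ball_self hr))))

theorem tendstoLocallyUniformlyOn_of_equicontinuousOn {ι X α : Type*} [TopologicalSpace X]
    [LocallyCompactSpace X] [UniformSpace α] {F : ι → X → α} {f : X → α} {l : Filter ι}
    {D : Set X} (hD : IsOpen D) (hF : EquicontinuousOn F D)
    (hlim : ∀ x ∈ D, Tendsto (fun i => F i x) l (𝓝 (f x))) :
    TendstoLocallyUniformlyOn F f l D := by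
  refine (tendstoLocallyUniformlyOn_iff_forall_isCompact hD).2 fun K hKD hK => ?_
  refine UniformOnFun.tendsto_iff_tendstoUniformlyOn.1
    ((EquicontinuousOn.tendsto_uniformOnFun_iff_pi' (𝔖 := {K}) ?_ ?_ l f).2 ?_) K rfl
  · rintro _ rfl
    exact hK
  · rintro _ rfl
    exact hF.mono hKD
  · rw [sUnion_singleton]
    exact tendsto_pi_nhds.2 fun x => hlim x (hKD x.2)

/- Vitali's theorem. Every ultrafilter yields a holomorphic limit of the family, which vanishes by
the identity theorem. -/
theorem tendsto_zero_of_frequently_tendsto_zero {ι : Type*} {F : ι → ℂ → ℂ} {l : Filter ι}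
    {D : Set ℂ} (hD : IsOpen D) (hDc : IsPreconnected D) (hF : ∀ i, DifferentiableOn ℂ (F i) D)
    {M : ℝ} (hM : ∀ i, ∀ t ∈ D, ‖F i t‖ ≤ M) {t₁ : ℂ} (ht₁ : t₁ ∈ D)
    (hlim : ∃ᶠ t in 𝓝[≠] t₁, Tendsto (fun i => F i t) l (𝓝 0)) :
    ∀ t ∈ D, Tendsto (fun i => F i t) l (𝓝 0) := by
  have hequi : EquicontinuousOn F D := fun x hx => by
    obtain ⟨r, hr, hrD⟩ := Metric.isOpen_iff.1 hD x hx
    exact (equicontinuousAt_of_differentiableOn_of_norm_le hr (fun i => (hF i).mono hrD)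
      fun i y hy => hM i y (hrD hy)).equicontinuousWithinAt D
  intro t ht
  refine tendsto_iff_ultrafilter _ _ _ |>.2 fun u hu => ?_
  have hex (s : ℂ) (hs : s ∈ D) : ∃ y, Tendsto (fun i => F i s) u (𝓝 y) := by
    obtain ⟨y, -, hy⟩ := (isCompact_closedBall (0 : ℂ) M).ultrafilter_le_nhds
      (u.map fun i => F i s) (le_principal_iff.2 (Filter.mem_map.2 (univ_mem' fun i => by
        simpa using hM i s hs)))
    exact ⟨y, hy⟩
  choose! φ hφ using hex
  have hφ_diff : DifferentiableOn ℂ φ D :=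
    (tendstoLocallyUniformlyOn_of_equicontinuousOn hD hequi hφ).differentiableOn
      (.of_forall hF) hD
  have hφ_zero : EqOn φ 0 D := by
    refine (hφ_diff.analyticOnNhd hD).eqOn_zero_of_preconnected_of_frequently_eq_zero hDc ht₁ ?_
    refine (hlim.and_eventually (nhdsWithin_le_nhds (hD.mem_nhds ht₁))).mono fun s hs => ?_
    exact tendsto_nhds_unique (hφ s hs.2) (hs.1.mono_left hu)
  have hφt := hφ t ht
  rwa [hφ_zero ht] at hφt

end BoundedFamilies

section RepellingFixedPoint

theorem eventually_mul_norm_sub_le {𝕜 : Type*} [NontriviallyNormedField 𝕜] {f : 𝕜 → 𝕜} {z ρ : 𝕜}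
    (hf : HasDerivAt f ρ z) {q : ℝ} (hq : q < ‖ρ‖) :
    ∀ᶠ w in 𝓝 z, q * ‖w - z‖ ≤ ‖f w - f z‖ := by
  refine (hf.isLittleO.bound (sub_pos.2 hq)).mono fun w hw => ?_
  have hsplit := norm_sub_norm_le ((w - z) • ρ) (f w - f z)
  rw [norm_sub_rev ((w - z) • ρ), norm_smul] at hsplit
  linarith

theorem eq_of_mul_norm_sub_le_of_norm_sub_lt {E : Type*} [NormedAddCommGroup E] {y : ℕ → E}
    {z : E} {q ε : ℝ} (hq : 1 < q) (hy : ∀ j, q * ‖y j - z‖ ≤ ‖y (j + 1) - z‖)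
    (hb : ∀ j, ‖y j - z‖ < ε) : y 0 = z := by
  have hgrow (j : ℕ) : q ^ j * ‖y 0 - z‖ ≤ ‖y j - z‖ := by
    induction j with
    | zero => simp
    | succ j ih =>
      rw [pow_succ', mul_assoc]
      exact (mul_le_mul_of_nonneg_left ih (zero_le_one.trans hq.le)).trans (hy j)
  by_contra hne
  have hpos : 0 < ‖y 0 - z‖ := norm_pos_iff.2 (sub_ne_zero.2 hne)
  obtain ⟨j, hj⟩ := pow_unbounded_of_one_lt (ε / ‖y 0 - z‖) hq
  exact ((div_lt_iff₀ hpos).1 hj).not_ge ((hgrow j).trans (hb j).le)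

theorem exists_mapClusterPt_isFixedPt {E : Type*} [NormedAddCommGroup E] [ProperSpace E]
    {g : E → E} (hg : Continuous g) {y : ℕ → E} (hy : ∀ k, y (k + 1) = g (y k))
    {R : ℝ} (hb : ∀ k, ‖y k‖ ≤ R) (hlim : Tendsto (fun k => y (k + 1) - y k) atTop (𝓝 0)) :
    ∃ z, g z = z ∧ MapClusterPt z atTop y := by
  obtain ⟨z, -, ψ, hψ, hz⟩ :=
    (isCompact_closedBall (0 : E) R).tendsto_subseq (x := y) fun k => by simpa using hb k
  refine ⟨z, ?_, hz.mapClusterPt.of_comp hψ.tendsto_atTop⟩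
  have hdiff : Tendsto (fun k => g (y (ψ k)) - y (ψ k)) atTop (𝓝 0) := by
    simpa only [Function.comp_def, hy] using hlim.comp hψ.tendsto_atTop
  exact sub_eq_zero.1 (tendsto_nhds_unique (((hg.tendsto z).comp hz).sub hz) hdiff)

theorem exists_succ_eq_of_tendsto_sub_zero {g : ℂ → ℂ} (hg : Differentiable ℂ g)
    (hrep : ∀ z, g z = z → 1 < ‖deriv g z‖) {y : ℕ → ℂ} (hy : ∀ k, y (k + 1) = g (y k)) {R : ℝ}
    (hb : ∀ k, ‖y k‖ ≤ R) (hlim : Tendsto (fun k => y (k + 1) - y k) atTop (𝓝 0)) :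
    ∃ K, y (K + 1) = y K := by
  obtain ⟨z, hz, hcluster⟩ := exists_mapClusterPt_isFixedPt hg.continuous hy hb hlim
  obtain ⟨q, hq, hqρ⟩ := exists_between (hrep z hz)
  have hq' : 0 < q - 1 := sub_pos.2 hq
  obtain ⟨ε, hε, hexp⟩ :=
    Metric.eventually_nhds_iff_ball.1 (eventually_mul_norm_sub_le (hg z).hasDerivAt hqρ)
  simp only [mem_ball_iff_norm, hz] at hexp
  have hsmall : ∀ᶠ k in atTop, ‖y (k + 1) - y k‖ < min (ε / 2) ((q - 1) * (ε / 2)) :=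
    hlim.norm.eventually_lt_const (by rw [norm_zero]; positivity)
  obtain ⟨K₀, hK₀⟩ := eventually_atTop.1 hsmall
  obtain ⟨K, hKz, hK⟩ := ((hcluster.frequently (ball_mem_nhds z hε)).and_eventually
    (eventually_ge_atTop K₀)).exists
  have htrapped (j : ℕ) : ‖y (K + j) - z‖ < ε := by
    induction j with
    | zero => exact mem_ball_iff_norm.1 hKz
    | succ j ih =>
      obtain ⟨hstep, hstep'⟩ := lt_min_iff.1 (hK₀ (K + j) (hK.trans (Nat.le_add_right K j)))
      have htri : ‖y (K + j + 1) - z‖ ≤ ‖y (K + j + 1) - y (K + j)‖ + ‖y (K + j) - z‖ :=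
        norm_sub_le_norm_sub_add_norm_sub _ _ _
      have hexp' := hexp _ ih
      rw [← hy] at hexp'
      have hclose : ‖y (K + j) - z‖ < ε / 2 := lt_of_mul_lt_mul_left (by linarith) hq'.le
      rw [← add_assoc]
      linarith
  have hyK : y K = z := by
    refine eq_of_mul_norm_sub_le_of_norm_sub_lt (y := fun j => y (K + j)) hq (fun j => ?_) htrapped
    rw [← add_assoc, hy]
    exact hexp _ (htrapped j)
  exact ⟨K, by rw [hy, hyK, hz]⟩

end RepellingFixedPoint

section Zeros

/- If `F x` had no zero in a small disc about `z₀`, the maximum principle for `1 / F x` would bound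
`‖F x z₀‖` from below by the minimum of `‖F x‖` on the boundary circle. -/
theorem eventually_exists_mem_eq_zero {X : Type*} [TopologicalSpace X] {F : X → ℂ → ℂ}
    (hF : Continuous (Function.uncurry F)) (hFd : ∀ x, Differentiable ℂ (F x)) {x₀ : X} {z₀ : ℂ}
    (h₀ : F x₀ z₀ = 0) (hiso : ∀ᶠ z in 𝓝[≠] z₀, F x₀ z ≠ 0) {V : Set ℂ} (hV : V ∈ 𝓝 z₀) :
    ∀ᶠ x in 𝓝 x₀, ∃ z ∈ V, F x z = 0 := by
  obtain ⟨r, hr, hball⟩ := nhds_basis_closedBall.eventually_iff.1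
    ((eventually_nhdsWithin_iff.1 hiso).and hV)
  have hne : ∀ z ∈ sphere z₀ r, F x₀ z ≠ 0 := fun z hz =>
    (hball (sphere_subset_closedBall hz)).1 (ne_of_mem_sphere hz hr.ne')
  obtain ⟨s, hs, hmin⟩ := (isCompact_sphere z₀ r).exists_isMinOn
    (NormedSpace.sphere_nonempty.2 hr.le) (hFd x₀).continuous.norm.continuousOn
  obtain ⟨δ, hδ, hδs⟩ := exists_between (norm_pos_iff.2 (hne s hs))
  have hsphere : ∀ᶠ x in 𝓝 x₀, ∀ z ∈ sphere z₀ r, δ < ‖F x z‖ :=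
    (isCompact_sphere z₀ r).eventually_forall_of_forall_eventually fun z hz =>
      (hF.norm.tendsto (x₀, z)).eventually_const_lt (hδs.trans_le (hmin hz))
  have hcentre : ∀ᶠ x in 𝓝 x₀, ‖F x z₀‖ < δ :=
    ((hF.comp (Continuous.prodMk_left z₀)).norm.tendsto x₀).eventually_lt_const (by simpa [h₀])
  filter_upwards [hsphere, hcentre] with x hxs hxc
  by_contra! hx
  have hx' : ∀ z ∈ closedBall z₀ r, F x z ≠ 0 := fun z hz => hx z (hball hz).2
  have hinv : DiffContOnCl ℂ (fun z => (F x z)⁻¹) (ball z₀ r) :=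
    DifferentiableOn.diffContOnCl_ball (U := closedBall z₀ r)
      ((hFd x).differentiableOn.inv hx') subset_rfl
  have hmax : ‖(F x z₀)⁻¹‖ ≤ δ⁻¹ := by
    refine Complex.norm_le_of_forall_mem_frontier_norm_le isBounded_ball hinv (fun z hz => ?_)
      (subset_closure (mem_ball_self hr))
    rw [frontier_ball _ hr.ne'] at hz
    rw [norm_inv]
    exact inv_anti₀ hδ (hxs z hz).le
  rw [norm_inv, inv_le_inv₀ (norm_pos_iff.2 (hx' z₀ (mem_closedBall_self hr.le))) hδ] at hmax
  exact hxc.not_ge hmax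

theorem dense_ne_zero {f : ℂ → ℂ} (hf : Differentiable ℂ f) {t₀ : ℂ} (ht₀ : f t₀ ≠ 0) :
    Dense {t | f t ≠ 0} := by
  intro t
  by_contra ht
  have hzero : ∀ᶠ s in 𝓝 t, f s = 0 := by simpa [mem_closure_iff_frequently] using ht
  have hf' := hf.differentiableOn.analyticOnNhd isOpen_univ
  exact ht₀ (hf'.eqOn_zero_of_preconnected_of_eventuallyEq_zero isPreconnected_univ (mem_univ t)
    hzero (mem_univ t₀))

end Zeros

section Multipliers

/-- The multipliers `(p^∘n)'(z)` of the fixed points `z` of the `n`-th iterate of `p`. -/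
def multipliers (p : ℂ[X]) (n : ℕ) : Set ℂ :=
  {l | ∃ z, (iterComp p n).eval z = z ∧ (iterComp p n).derivative.eval z = l}

/-- The resultant of `p^∘n(z) - z` and `(p^∘n)'(z) - l` in `z`; as a function of `l` it vanishes
exactly at the multipliers of the fixed points of `p^∘n`. -/
@[irreducible]
noncomputable def multiplierResultant (p : ℂ[X]) (n : ℕ) (l : ℂ) : ℂ :=
  resultant (iterComp p n - X) ((iterComp p n).derivative - C l)
    (p.natDegree ^ n) (p.natDegree ^ n)

variable {p : ℂ[X]} {n : ℕ}

theorem natDegree_iterComp_sub_X (hp : 2 ≤ p.natDegree) (hn : n ≠ 0) :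
    (iterComp p n - X).natDegree = p.natDegree ^ n := by
  rw [natDegree_sub_eq_left_of_natDegree_lt, natDegree_iterComp]
  rw [natDegree_iterComp, natDegree_X]
  exact Nat.one_lt_pow hn hp

theorem iterComp_sub_X_ne_zero (hp : 2 ≤ p.natDegree) (hn : n ≠ 0) : iterComp p n - X ≠ 0 :=
  ne_zero_of_natDegree_gt (n := 0) <| by
    rw [natDegree_iterComp_sub_X hp hn]
    positivity

theorem mem_roots_iterComp_sub_X (hp : 2 ≤ p.natDegree) (hn : n ≠ 0) {z : ℂ} :
    z ∈ (iterComp p n - X).roots ↔ (iterComp p n).eval z = z := by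
  rw [mem_roots (iterComp_sub_X_ne_zero hp hn), IsRoot.def, eval_sub, eval_X, sub_eq_zero]

theorem finite_multipliers (hp : 2 ≤ p.natDegree) (hn : n ≠ 0) : (multipliers p n).Finite := by
  refine ((iterComp p n - X).roots.toFinset.finite_toSet.image
    fun z => (iterComp p n).derivative.eval z).subset ?_
  rintro _ ⟨z, hz, rfl⟩
  exact mem_image_of_mem _ (by simpa using (mem_roots_iterComp_sub_X hp hn).2 hz)

theorem multiplierResultant_eq_zero_iff (hp : 2 ≤ p.natDegree) (hn : n ≠ 0) {l : ℂ} :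
    multiplierResultant p n l = 0 ↔ l ∈ multipliers p n := by
  have hdeg : ((iterComp p n).derivative - C l).natDegree ≤ p.natDegree ^ n := by
    rw [natDegree_sub_C, ← natDegree_iterComp]
    exact (natDegree_derivative_le _).trans (Nat.sub_le _ _)
  have hprod := resultant_eq_prod_eval (iterComp p n - X) ((iterComp p n).derivative - C l)
    (p.natDegree ^ n) hdeg (IsAlgClosed.splits _)
  rw [natDegree_iterComp_sub_X hp hn] at hprod
  have hlead := pow_ne_zero (p.natDegree ^ n)
    (leadingCoeff_ne_zero.2 (iterComp_sub_X_ne_zero hp hn))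
  simp only [multiplierResultant, hprod, mul_eq_zero, hlead, false_or, Multiset.prod_eq_zero_iff,
    Multiset.mem_map, mem_roots_iterComp_sub_X hp hn, eval_sub, eval_C, sub_eq_zero, multipliers,
    mem_ofPred_eq]

end Multipliers

section Coefficients

variable {𝕜 T : Type*} [NontriviallyNormedField 𝕜] [NormedAddCommGroup T] [NormedSpace 𝕜 T]
  {f g : T → 𝕜[X]}

theorem differentiable_coeff_mul (hf : ∀ k, Differentiable 𝕜 fun t => (f t).coeff k)
    (hg : ∀ k, Differentiable 𝕜 fun t => (g t).coeff k) (k : ℕ) :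
    Differentiable 𝕜 fun t => (f t * g t).coeff k := by
  simp only [coeff_mul]
  exact Differentiable.fun_sum fun x _ => (hf x.1).mul (hg x.2)

theorem differentiable_coeff_pow (hf : ∀ k, Differentiable 𝕜 fun t => (f t).coeff k) (m k : ℕ) :
    Differentiable 𝕜 fun t => (f t ^ m).coeff k := by
  induction m generalizing k with
  | zero => simp only [pow_zero, differentiable_const]
  | succ m ih =>
    simp only [pow_succ]
    exact differentiable_coeff_mul ih hf k

theorem differentiable_coeff_comp {N : ℕ} (hN : ∀ t, (f t).natDegree ≤ N)
    (hf : ∀ k, Differentiable 𝕜 fun t => (f t).coeff k)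
    (hg : ∀ k, Differentiable 𝕜 fun t => (g t).coeff k) (k : ℕ) :
    Differentiable 𝕜 fun t => ((f t).comp (g t)).coeff k := by
  have hsum (t : T) : ((f t).comp (g t)).coeff k =
      ∑ i ∈ Finset.range (N + 1), (f t).coeff i * (g t ^ i).coeff k := by
    rw [comp, eval₂_eq_sum_range' C (Nat.lt_succ_of_le (hN t)), finsetSum_coeff]
    simp only [coeff_C_mul]
  simp only [hsum]
  exact Differentiable.fun_sum fun i _ => (hf i).mul (differentiable_coeff_pow hg i k)

theorem differentiable_resultant (hf : ∀ k, Differentiable 𝕜 fun t => (f t).coeff k)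
    (hg : ∀ k, Differentiable 𝕜 fun t => (g t).coeff k) (m n : ℕ) :
    Differentiable 𝕜 fun t => resultant (f t) (g t) m n := by
  have hsylvester (i j : Fin (m + n)) :
      Differentiable 𝕜 fun t => sylvester (f t) (g t) m n i j := by
    unfold sylvester
    simp only [Matrix.of_apply]
    refine Fin.addCases (fun j => ?_) (fun j => ?_) j
    · simp only [Fin.addCases_left]
      split_ifs
      · exact hg _
      · exact differentiable_const 0
    · simp only [Fin.addCases_right]
      split_ifs
      · exact hf _
      · exact differentiable_const 0
  simp only [resultant, Matrix.det_apply]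
  refine Differentiable.fun_sum fun σ _ => Differentiable.const_smul (fun t => ?_) _
  exact (HasFDerivAt.finsetProd fun i _ => (hsylvester (σ i) i t).hasFDerivAt).differentiableAt

end Coefficients

theorem isEscapeRadius_eval {p : ℂ[X]} (hp : 2 ≤ p.natDegree) :
    IsEscapeRadius p.eval
      (max 1 ((∑ k ∈ Finset.range p.natDegree, ‖p.coeff k‖ + 2) / ‖p.coeff p.natDegree‖)) where
  nonneg := zero_le_one.trans (le_max_left _ _)
  two_mul_norm_le z hz := by
    obtain ⟨e, he⟩ : ∃ e, p.natDegree = e + 1 + 1 := Nat.exists_eq_add_of_le' hp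
    set A := ∑ k ∈ Finset.range p.natDegree, ‖p.coeff k‖ with hA
    obtain ⟨hz₁, hz₂⟩ := max_lt_iff.1 hz
    have hlead : 0 < ‖p.coeff p.natDegree‖ := by
      rw [coeff_natDegree, norm_pos_iff, leadingCoeff_ne_zero]
      exact ne_zero_of_natDegree_gt hp
    have hgrow : 2 ≤ ‖p.coeff p.natDegree‖ * ‖z‖ - A := by
      rw [div_lt_iff₀' hlead] at hz₂
      linarith
    have hlower : ‖∑ k ∈ Finset.range p.natDegree, p.coeff k * z ^ k‖ ≤ A * ‖z‖ ^ (e + 1) := by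
      rw [hA, Finset.sum_mul]
      refine norm_sum_le_of_le _ fun k hk => ?_
      rw [norm_mul, norm_pow]
      gcongr
      · exact hz₁.le
      · have := Finset.mem_range.1 hk
        omega
    calc 2 * ‖z‖ ≤ (‖p.coeff p.natDegree‖ * ‖z‖ - A) * ‖z‖ ^ (e + 1) :=
          mul_le_mul hgrow (le_self_pow₀ hz₁.le e.succ_ne_zero) (norm_nonneg z) (by linarith)
      _ = ‖p.coeff p.natDegree * z ^ p.natDegree‖ - A * ‖z‖ ^ (e + 1) := by
          rw [norm_mul, norm_pow, he]
          ring
      _ ≤ ‖p.coeff p.natDegree * z ^ p.natDegree‖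
          - ‖∑ k ∈ Finset.range p.natDegree, p.coeff k * z ^ k‖ := by gcongr
      _ ≤ ‖p.eval z‖ := by
          rw [eval_eq_sum_range, Finset.sum_range_succ, add_comm]
          exact norm_sub_le_norm_add _ _

/-- A family of polynomials of constant degree `d` whose coefficients depend holomorphically on
the parameter. -/
structure IsHolomorphicFamily {T : Type*} [NormedAddCommGroup T] [NormedSpace ℂ T]
    (P : T → ℂ[X]) (d : ℕ) : Prop where
  natDegree_eq : ∀ t, (P t).natDegree = d
  differentiable_coeff : ∀ k, Differentiable ℂ fun t => (P t).coeff k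

/-- The parameters `t` for which `P t` has a non-repelling cycle whose period divides `n`. -/
def nonRepellingLocus {T : Type*} (P : T → ℂ[X]) (n : ℕ) : Set T :=
  {t | ∃ l ∈ multipliers (P t) n, ‖l‖ ≤ 1}

namespace IsHolomorphicFamily

variable {T : Type*} [NormedAddCommGroup T] [NormedSpace ℂ T] {P : T → ℂ[X]} {d : ℕ}

theorem differentiable_eval (hP : IsHolomorphicFamily P d) :
    Differentiable ℂ fun x : T × ℂ => (P x.1).eval x.2 := by
  have hsum (x : T × ℂ) :
      (P x.1).eval x.2 = ∑ k ∈ Finset.range (d + 1), (P x.1).coeff k * x.2 ^ k := by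
    rw [eval_eq_sum_range, hP.natDegree_eq]
  simp only [hsum]
  exact Differentiable.fun_sum fun k _ =>
    ((hP.differentiable_coeff k).comp differentiable_fst).mul (differentiable_snd.pow k)

theorem comp_left {T' : Type*} [NormedAddCommGroup T'] [NormedSpace ℂ T'] {L : T' → T}
    (hP : IsHolomorphicFamily P d) (hL : Differentiable ℂ L) : IsHolomorphicFamily (P ∘ L) d where
  natDegree_eq t := hP.natDegree_eq (L t)
  differentiable_coeff k := (hP.differentiable_coeff k).comp hL

theorem iterate (hP : IsHolomorphicFamily P d) (n : ℕ) :
    IsHolomorphicFamily (fun t => iterComp (P t) n) (d ^ n) where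
  natDegree_eq t := by rw [natDegree_iterComp, hP.natDegree_eq]
  differentiable_coeff := by
    induction n with
    | zero => exact fun k => differentiable_const (coeff X k)
    | succ n ih =>
      simp only [iterComp_succ]
      exact differentiable_coeff_comp (fun t => (hP.natDegree_eq t).le) hP.differentiable_coeff ih

theorem differentiable_iterate_eval (hP : IsHolomorphicFamily P d) {γ : T → ℂ}
    (hγ : Differentiable ℂ γ) (k : ℕ) : Differentiable ℂ fun t => (P t).eval^[k] (γ t) := by
  simp only [← eval_iterComp]
  exact (hP.iterate k).differentiable_eval.comp (differentiable_id.prodMk hγ)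

theorem exists_eventually_isEscapeRadius (hP : IsHolomorphicFamily P d) (hd : 2 ≤ d) (t₀ : T) :
    ∃ R, ∀ᶠ t in 𝓝 t₀, IsEscapeRadius (P t).eval R := by
  let r (t : T) : ℝ := max 1 ((∑ k ∈ Finset.range d, ‖(P t).coeff k‖ + 2) / ‖(P t).coeff d‖)
  have hr (t : T) : IsEscapeRadius (P t).eval (r t) := by
    simpa only [hP.natDegree_eq] using isEscapeRadius_eval (hd.trans_eq (hP.natDegree_eq t).symm)
  have hlead (t : T) : ‖(P t).coeff d‖ ≠ 0 := by
    rw [norm_ne_zero_iff, ← hP.natDegree_eq t, coeff_natDegree, leadingCoeff_ne_zero]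
    exact ne_zero_of_natDegree_gt (hd.trans_eq (hP.natDegree_eq t).symm)
  have hcoeff (k : ℕ) : Continuous fun t => (P t).coeff k := (hP.differentiable_coeff k).continuous
  have hr_cont : Continuous r := by fun_prop (disch := exact hlead _)
  exact ⟨r t₀ + 1, (hr_cont.continuousAt.eventually_lt_const (lt_add_one _)).mono
    fun t ht => (hr t).mono ht.le⟩

theorem differentiable_multiplierResultant (hP : IsHolomorphicFamily P d) (n : ℕ) :
    Differentiable ℂ fun x : T × ℂ => multiplierResultant (P x.1) n x.2 := by
  have hcoeff (k : ℕ) : Differentiable ℂ fun x : T × ℂ => (iterComp (P x.1) n).coeff k :=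
    ((hP.iterate n).differentiable_coeff k).comp differentiable_fst
  simp only [multiplierResultant, hP.natDegree_eq]
  refine differentiable_resultant (fun k => ?_) (fun k => ?_) _ _
  · simp only [coeff_sub]
    exact (hcoeff k).sub_const _
  · simp only [coeff_sub, coeff_derivative, coeff_C]
    refine ((hcoeff (k + 1)).mul_const _).sub ?_
    split_ifs
    · exact differentiable_snd
    · exact differentiable_const 0

theorem multiplierResultant_eq_zero_iff (hP : IsHolomorphicFamily P d) (hd : 2 ≤ d) {n : ℕ}
    (hn : n ≠ 0) {t : T} {l : ℂ} : multiplierResultant (P t) n l = 0 ↔ l ∈ multipliers (P t) n :=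
  _root_.multiplierResultant_eq_zero_iff (hd.trans_eq (hP.natDegree_eq t).symm) hn

theorem isClosed_nonRepellingLocus (hP : IsHolomorphicFamily P d) (hd : 2 ≤ d) {n : ℕ}
    (hn : n ≠ 0) : IsClosed (nonRepellingLocus P n) := by
  have hcompl : (nonRepellingLocus P n)ᶜ =
      {t | ∀ l ∈ closedBall (0 : ℂ) 1, multiplierResultant (P t) n l ≠ 0} := by
    ext t
    simp [nonRepellingLocus, hP.multiplierResultant_eq_zero_iff hd hn, imp_not_comm]
  rw [← isOpen_compl_iff, hcompl, isOpen_iff_eventually]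
  intro t ht
  exact (isCompact_closedBall (0 : ℂ) 1).eventually_forall_of_forall_eventually fun l hl =>
    (hP.differentiable_multiplierResultant n).continuous.continuousAt.eventually_ne (ht l hl)

end IsHolomorphicFamily

/-- The parameters `t` for which every critical point of `P t` has bounded orbit. -/
def boundedCriticalLocus {T : Type*} (P : T → ℂ[X]) : Set T :=
  {t | ∀ c, (P t).derivative.eval c = 0 → Bornology.IsBounded (range fun k => (P t).eval^[k] c)}

/-- Holomorphic functions `γ i` of the parameter that enumerate the critical points of the family
`P`. -/
structure IsCriticalMarking {T ι : Type*} [NormedAddCommGroup T] [NormedSpace ℂ T]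
    (P : T → ℂ[X]) (γ : ι → T → ℂ) : Prop where
  differentiable : ∀ i, Differentiable ℂ (γ i)
  eval_derivative_eq_zero_iff : ∀ t z, (P t).derivative.eval z = 0 ↔ ∃ i, γ i t = z

theorem IsCriticalMarking.comp_left {T T' ι : Type*} [NormedAddCommGroup T] [NormedSpace ℂ T]
    [NormedAddCommGroup T'] [NormedSpace ℂ T'] {P : T → ℂ[X]} {γ : ι → T → ℂ} {L : T' → T}
    (hγ : IsCriticalMarking P γ) (hL : Differentiable ℂ L) :
    IsCriticalMarking (P ∘ L) (fun i => γ i ∘ L) where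
  differentiable i := (hγ.differentiable i).comp hL
  eval_derivative_eq_zero_iff t := hγ.eval_derivative_eq_zero_iff (L t)

namespace IsHolomorphicFamily

section Persistence

variable {T : Type*} [NormedAddCommGroup T] [NormedSpace ℂ T] {P : T → ℂ[X]} {d n : ℕ}

theorem eventually_exists_mem_multipliers (hP : IsHolomorphicFamily P d) (hd : 2 ≤ d)
    (hn : n ≠ 0) {t₀ : T} {l : ℂ} (hl : l ∈ multipliers (P t₀) n) {V : Set ℂ} (hV : V ∈ 𝓝 l) :
    ∀ᶠ t in 𝓝 t₀, ∃ l' ∈ V, l' ∈ multipliers (P t) n := by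
  have hE := hP.differentiable_multiplierResultant n
  simp only [← hP.multiplierResultant_eq_zero_iff hd hn] at hl ⊢
  refine eventually_exists_mem_eq_zero (F := fun t l => multiplierResultant (P t) n l)
    hE.continuous (fun t => hE.comp ((differentiable_const t).prodMk differentiable_id)) hl ?_ hV
  have hfin := finite_multipliers (hd.trans_eq (hP.natDegree_eq t₀).symm) hn
  filter_upwards [nhdsNE_le_cofinite l hfin.compl_mem_cofinite] with l' hl'
  exact (hP.multiplierResultant_eq_zero_iff hd hn).not.2 hl'

theorem eventually_exists_mem_multipliers_norm_lt_one (hP : IsHolomorphicFamily P d) (hd : 2 ≤ d)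
    (hn : n ≠ 0) {t₀ : T} {l : ℂ} (hl : l ∈ multipliers (P t₀) n) (hl₁ : ‖l‖ < 1) :
    ∀ᶠ t in 𝓝 t₀, ∃ l' ∈ multipliers (P t) n, ‖l'‖ < 1 := by
  refine (hP.eventually_exists_mem_multipliers hd hn hl
    (isOpen_ball.mem_nhds (mem_ball_zero_iff.2 hl₁))).mono ?_
  rintro t ⟨l', hl'₁, hl'⟩
  exact ⟨l', hl', mem_ball_zero_iff.1 hl'₁⟩

end Persistence

section OneParameter

variable {P : ℂ → ℂ[X]} {d n : ℕ} {D : Set ℂ}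

theorem mem_multipliers_of_frequently (hP : IsHolomorphicFamily P d) (hd : 2 ≤ d) (hn : n ≠ 0)
    {l t₀ : ℂ} (hl : ∃ᶠ t in 𝓝[≠] t₀, l ∈ multipliers (P t) n) (t : ℂ) :
    l ∈ multipliers (P t) n := by
  simp only [← hP.multiplierResultant_eq_zero_iff hd hn] at hl ⊢
  have hE : Differentiable ℂ fun t => multiplierResultant (P t) n l :=
    (hP.differentiable_multiplierResultant n).comp
      (differentiable_id.prodMk (differentiable_const l))
  have hE' := hE.differentiableOn.analyticOnNhd isOpen_univ
  exact hE'.eqOn_zero_of_preconnected_of_frequently_eq_zero isPreconnected_univ (mem_univ t₀) hl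
    (mem_univ t)

/- Hurwitz's theorem with parameter and multiplier exchanged: an isolated zero in `t` of the
multiplier resultant at `l₀` would persist for the nearby `l` with `‖l‖ < 1`. -/
theorem mem_multipliers_of_forall_one_le_norm (hP : IsHolomorphicFamily P d) (hd : 2 ≤ d)
    (hn : n ≠ 0) {t₀ l₀ : ℂ} (hone_le : ∀ᶠ t in 𝓝 t₀, ∀ l ∈ multipliers (P t) n, 1 ≤ ‖l‖)
    (hl₀ : l₀ ∈ multipliers (P t₀) n) (hl₀₁ : ‖l₀‖ ≤ 1) (t : ℂ) : l₀ ∈ multipliers (P t) n := by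
  refine hP.mem_multipliers_of_frequently hd hn (t₀ := t₀) (fun hiso => ?_) t
  have hE := hP.differentiable_multiplierResultant n
  simp only [← hP.multiplierResultant_eq_zero_iff hd hn] at hone_le hl₀ hiso
  have hroot := eventually_exists_mem_eq_zero (F := fun l t => multiplierResultant (P t) n l)
    (hE.continuous.comp continuous_swap)
    (fun l => hE.comp (differentiable_id.prodMk (differentiable_const l))) hl₀ hiso hone_le
  have hl₀_closure : l₀ ∈ closure (ball (0 : ℂ) 1) := by
    rwa [closure_ball _ one_ne_zero, mem_closedBall_zero_iff]
  obtain ⟨l, hl, t, ht, htl⟩ :=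
    ((mem_closure_iff_frequently.1 hl₀_closure).and_eventually hroot).exists
  exact (mem_ball_zero_iff.1 hl).not_ge (ht l htl)

theorem zero_mem_multipliers_of_attracting (hP : IsHolomorphicFamily P d) (hd : 2 ≤ d)
    (hn : n ≠ 0) {t₀ l₀ : ℂ}
    (hsuper : ∀ᶠ t in 𝓝 t₀, ∀ l ∈ multipliers (P t) n, ‖l‖ < 1 → l = 0)
    (hl₀ : l₀ ∈ multipliers (P t₀) n) (hl₀₁ : ‖l₀‖ < 1) (t : ℂ) : 0 ∈ multipliers (P t) n := by
  refine hP.mem_multipliers_of_frequently hd hn (t₀ := t₀) (Eventually.frequently ?_) t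
  filter_upwards [nhdsWithin_le_nhds hsuper, nhdsWithin_le_nhds
    (hP.eventually_exists_mem_multipliers_norm_lt_one hd hn hl₀ hl₀₁)] with t ht ⟨l, hl, hl₁⟩
  exact ht l hl hl₁ ▸ hl

variable {ι : Type*} {γ : ι → ℂ → ℂ} {R : ℝ}

theorem exists_frequently_tendsto_iterate_critical [Finite ι] (hP : IsHolomorphicFamily P d)
    (hd : 2 ≤ d) (hγ : IsCriticalMarking P γ) (hn : n ≠ 0) (hD : IsOpen D)
    (hR : ∀ t ∈ D, IsEscapeRadius (P t).eval R) {t₀ : ℂ} (ht₀ : t₀ ∈ D) {l₀ : ℂ}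
    (hl₀ : l₀ ∈ multipliers (P t₀) n) (hl₀_ne : l₀ ≠ 0) (hl₀_lt : ‖l₀‖ < 1) :
    ∃ i, ∃ᶠ t in 𝓝[≠] t₀,
      (∃ y, Tendsto (fun m => (iterComp (P t) n).eval^[m] (γ i t)) atTop (𝓝 y)) ∧
        ∀ m, (iterComp (P t) n).eval^[m + 1] (γ i t) ≠ (iterComp (P t) n).eval^[m] (γ i t) := by
  have hV : ball (0 : ℂ) 1 \ {0} ∈ 𝓝 l₀ :=
    (isOpen_ball.sdiff isClosed_singleton).mem_nhds ⟨mem_ball_zero_iff.2 hl₀_lt, hl₀_ne⟩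
  refine frequently_exists.1 (Eventually.frequently (eventually_nhdsWithin_of_eventually_nhds ?_))
  filter_upwards [hD.mem_nhds ht₀, hP.eventually_exists_mem_multipliers hd hn hl₀ hV]
  rintro t ht ⟨_, ⟨hz_lt, hz_ne⟩, z, hz, rfl⟩
  obtain ⟨c, hc, hlim⟩ := exists_critical_tendsto_attracting_cycle (hR t ht) hn hz hz_ne
    (mem_ball_zero_iff.1 hz_lt)
  obtain ⟨i, rfl⟩ := (hγ.eval_derivative_eq_zero_iff t c).1 hc
  exact ⟨i, hlim⟩

theorem subset_nonRepellingLocus_of_frequently_tendsto (hP : IsHolomorphicFamily P d) (hd : 2 ≤ d)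
    (hn : n ≠ 0) (hD : IsOpen D) (hDc : IsPreconnected D) {γ : ℂ → ℂ} (hγ : Differentiable ℂ γ)
    (hR : ∀ t ∈ D, ∀ m, ‖(iterComp (P t) n).eval^[m] (γ t)‖ ≤ R) {t₀ : ℂ} (ht₀ : t₀ ∈ D)
    (hfreq : ∃ᶠ t in 𝓝[≠] t₀,
      (∃ y, Tendsto (fun m => (iterComp (P t) n).eval^[m] (γ t)) atTop (𝓝 y)) ∧
        ∀ m, (iterComp (P t) n).eval^[m + 1] (γ t) ≠ (iterComp (P t) n).eval^[m] (γ t)) :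
    D ⊆ nonRepellingLocus P n := by
  let g (t : ℂ) : ℂ → ℂ := (iterComp (P t) n).eval
  let F (m : ℕ) (t : ℂ) : ℂ := (g t)^[m + 1] (γ t) - (g t)^[m] (γ t)
  have hF (m : ℕ) : Differentiable ℂ (F m) :=
    ((hP.iterate n).differentiable_iterate_eval hγ (m + 1)).sub
      ((hP.iterate n).differentiable_iterate_eval hγ m)
  have hF_bound (m : ℕ) (t : ℂ) (ht : t ∈ D) : ‖F m t‖ ≤ R + R :=
    (norm_sub_le _ _).trans (add_le_add (hR t ht _) (hR t ht _))
  have hF_lim : ∀ t ∈ D, Tendsto (fun m => F m t) atTop (𝓝 0) := by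
    refine tendsto_zero_of_frequently_tendsto_zero hD hDc (fun m => (hF m).differentiableOn)
      hF_bound ht₀ (hfreq.mono ?_)
    rintro t ⟨⟨y, hy⟩, -⟩
    have hsub := ((tendsto_add_atTop_iff_nat 1).2 hy).sub hy
    rw [sub_self] at hsub
    exact hsub
  have hdense : Dense (⋂ m, {t | F m t ≠ 0}) := by
    obtain ⟨t, -, ht⟩ := hfreq.exists
    exact dense_iInter_of_isOpen (fun m => isOpen_ne_fun (hF m).continuous continuous_const)
      fun m => dense_ne_zero (hF m) (sub_ne_zero.2 (ht m))
  by_contra! hnot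
  obtain ⟨t, ⟨htD, htN⟩, htF⟩ := hdense.inter_open_nonempty _
    (hD.inter (hP.isClosed_nonRepellingLocus hd hn).isOpen_compl) (not_subset.1 hnot)
  obtain ⟨m, hm⟩ : ∃ m, (g t)^[m + 1] (γ t) = (g t)^[m] (γ t) := by
    refine exists_succ_eq_of_tendsto_sub_zero (iterComp (P t) n).differentiable (fun z hz => ?_)
      (fun k => Function.iterate_succ_apply' _ _ _) (hR t htD) (hF_lim t htD)
    rw [Polynomial.deriv]
    exact not_le.1 fun h => htN ⟨_, ⟨z, hz, rfl⟩, h⟩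
  exact mem_iInter.1 htF m (sub_eq_zero.2 hm)

theorem subset_nonRepellingLocus [Finite ι] (hP : IsHolomorphicFamily P d)
    (hd : 2 ≤ d) (hγ : IsCriticalMarking P γ) (hn : n ≠ 0) (hD : IsOpen D)
    (hDc : IsPreconnected D) (hR : ∀ t ∈ D, IsEscapeRadius (P t).eval R)
    (hDB : D ⊆ boundedCriticalLocus P) (hne : (D ∩ nonRepellingLocus P n).Nonempty) :
    D ⊆ nonRepellingLocus P n := by
  by_cases hattr : ∃ t ∈ D, ∃ l ∈ multipliers (P t) n, ‖l‖ < 1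
  · by_cases hgeom : ∃ t ∈ D, ∃ l ∈ multipliers (P t) n, ‖l‖ < 1 ∧ l ≠ 0
    · obtain ⟨t₀, ht₀, l₀, hl₀, hl₀_lt, hl₀_ne⟩ := hgeom
      obtain ⟨i, hi⟩ := hP.exists_frequently_tendsto_iterate_critical hd hγ hn hD hR ht₀ hl₀ hl₀_ne
        hl₀_lt
      refine hP.subset_nonRepellingLocus_of_frequently_tendsto (R := R) hd hn hD hDc
        (hγ.differentiable i) (fun t ht m => ?_) ht₀ hi
      rw [funext (eval_iterComp (P t) n), ← Function.iterate_mul]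
      have hcrit := (hγ.eval_derivative_eq_zero_iff t (γ i t)).2 ⟨i, rfl⟩
      exact (hR t ht).norm_iterate_le (hDB ht _ hcrit) (n * m)
    · push Not at hgeom
      obtain ⟨t₀, ht₀, l₀, hl₀, hl₀_lt⟩ := hattr
      have hzero := hP.zero_mem_multipliers_of_attracting hd hn
        (eventually_of_mem (hD.mem_nhds ht₀) hgeom) hl₀ hl₀_lt
      exact fun t _ => ⟨0, hzero t, by simp⟩
  · push Not at hattr
    obtain ⟨t₀, ht₀, l₀, hl₀, hl₀_le⟩ := hne
    have hneutral := hP.mem_multipliers_of_forall_one_le_norm hd hn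
      (eventually_of_mem (hD.mem_nhds ht₀) hattr) hl₀ hl₀_le
    exact fun t _ => ⟨l₀, hneutral t, hl₀_le⟩

end OneParameter

section Global

variable {T : Type*} [NormedAddCommGroup T] [NormedSpace ℂ T] {P : T → ℂ[X]} {d n : ℕ}
  {ι : Type*} [Finite ι] {γ : ι → T → ℂ}

/- Any two points of a ball lie on a common complex line, which meets the ball in a convex set. -/
theorem nonRepellingLocus_mem_nhds (hP : IsHolomorphicFamily P d) (hd : 2 ≤ d)
    (hγ : IsCriticalMarking P γ) (hn : n ≠ 0) {t₀ : T}
    (ht₀ : t₀ ∈ interior (boundedCriticalLocus P)) (hN : t₀ ∈ nonRepellingLocus P n) :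
    nonRepellingLocus P n ∈ 𝓝 t₀ := by
  obtain ⟨R, hR⟩ := hP.exists_eventually_isEscapeRadius hd t₀
  obtain ⟨ε, hε, hball⟩ := eventually_nhds_iff_ball.1
    (hR.and (mem_interior_iff_mem_nhds.1 ht₀ : ∀ᶠ t in 𝓝 t₀, t ∈ boundedCriticalLocus P))
  refine mem_of_superset (ball_mem_nhds t₀ hε) fun t ht => ?_
  let L (s : ℂ) : T := t₀ + s • (t - t₀)
  have hL : Differentiable ℂ L := by fun_prop
  have hL₀ : L 0 = t₀ := by simp [L]
  have hL₁ : L 1 = t := by simp [L]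
  have hconvex : Convex ℝ (L ⁻¹' ball t₀ ε) :=
    ((convex_ball t₀ ε).translate_preimage_right t₀).is_linear_preimage
      ((LinearMap.toSpanSingleton ℂ T (t - t₀)).restrictScalars ℝ).isLinear
  have hzero_mem : (0 : ℂ) ∈ L ⁻¹' (ball t₀ ε ∩ nonRepellingLocus P n) := by
    rw [mem_preimage, hL₀]
    exact ⟨mem_ball_self hε, hN⟩
  have hsub : L ⁻¹' ball t₀ ε ⊆ nonRepellingLocus (P ∘ L) n :=
    (hP.comp_left hL).subset_nonRepellingLocus hd (hγ.comp_left hL) hn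
      (isOpen_ball.preimage hL.continuous) hconvex.isPreconnected
      (fun s hs => (hball (L s) hs).1) (fun s hs => (hball (L s) hs).2)
      ⟨0, hzero_mem⟩
  rw [← hL₁] at ht ⊢
  exact hsub ht

end Global

end IsHolomorphicFamily

theorem stmt8_general {T : Type*} [NormedAddCommGroup T] [NormedSpace ℂ T] {ι : Type*} [Finite ι]
    {P : T → ℂ[X]} {d : ℕ} (hd : 2 ≤ d) (hP : IsHolomorphicFamily P d) {γ : ι → T → ℂ}
    (hγ : IsCriticalMarking P γ) {n : ℕ} (hn : n ≠ 0) {U : Set T} (hU : IsPreconnected U)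
    (hUB : U ⊆ interior (boundedCriticalLocus P)) (hne : (U ∩ nonRepellingLocus P n).Nonempty) :
    closure U ⊆ nonRepellingLocus P n := by
  have hclosed := hP.isClosed_nonRepellingLocus hd hn
  have hinterior {t : T} (ht : t ∈ U) (hN : t ∈ nonRepellingLocus P n) :
      t ∈ interior (nonRepellingLocus P n) :=
    mem_interior_iff_mem_nhds.2 (hP.nonRepellingLocus_mem_nhds hd hγ hn (hUB ht) hN)
  obtain ⟨t₀, ht₀, hN₀⟩ := hne
  refine closure_minimal (subset_trans ?_ interior_subset) hclosed
  refine hU.subset_of_closure_inter_subset isOpen_interior ⟨t₀, ht₀, hinterior ht₀ hN₀⟩ ?_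
  exact fun t ht => hinterior ht.2 (closure_minimal interior_subset hclosed ht.1)

@[fun_prop]
theorem differentiable_sigmaE (n m : ℕ) : Differentiable ℂ fun c : Fin n → ℂ => sigmaE c m := by
  simp only [sigmaE, Finset.esymm_map_val]
  fun_prop

theorem prod_X_sub_C_eq_sum_monomial {n : ℕ} (c : Fin n → ℂ) :
    ∏ i, (X - C (c i)) =
      ∑ k ∈ Finset.range (n + 1), monomial k ((-1 : ℂ) ^ (n - k) * sigmaE c (n - k)) := by
  have hprod : ∏ i, (X - C (c i)) = ((Finset.univ.val.map c).map fun r => X - C r).prod := by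
    rw [Multiset.map_map]
    rfl
  have hdeg : (∏ i, (X - C (c i))).natDegree < n + 1 := by
    simp [natDegree_prod_of_monic _ _ fun i _ => monic_X_sub_C (c i)]
  rw [as_sum_range' _ _ hdeg]
  refine Finset.sum_congr rfl fun k hk => ?_
  have hcard : Multiset.card (Finset.univ.val.map c) = n := by simp
  rw [hprod, Multiset.prod_X_sub_C_coeff _ (hcard.symm ▸ Finset.mem_range_succ_iff.1 hk), hcard,
    sigmaE]

section PcaPolynomial

/-- `P_{c,a}` as a formal polynomial. The leading term `z ^ d / d` of `Pca` is the summand `j = d`,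
as `σ₀ = 1`. -/
noncomputable def pcaPolynomial (d : ℕ) (p : (Fin (d - 2) → ℂ) × ℂ) : ℂ[X] :=
  ∑ j ∈ Finset.Ico 2 (d + 1), monomial j ((-1 : ℂ) ^ (d - j) * sigmaE p.1 (d - j) / j) +
    C (p.2 ^ d)

variable {d : ℕ}

theorem eval_pcaPolynomial (hd : 2 ≤ d) (p : (Fin (d - 2) → ℂ) × ℂ) :
    (pcaPolynomial d p).eval = Pca d p.1 p.2 := by
  funext z
  have hIcc : Finset.Icc 2 (d - 1) = Finset.Ico 2 d := by
    ext j
    simp only [Finset.mem_Icc, Finset.mem_Ico]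
    omega
  have hσ : sigmaE p.1 0 = 1 := by
    simp only [sigmaE, Finset.esymm_map_val, Finset.powersetCard_zero, Finset.sum_singleton,
      Finset.prod_empty]
  rw [pcaPolynomial, Pca, hIcc, Finset.sum_Ico_succ_top hd, add_comm (z ^ d / d)]
  simp only [eval_add, eval_finsetSum, eval_monomial, eval_C, Nat.sub_self, pow_zero, hσ,
    one_mul, div_mul_eq_mul_div]

theorem derivative_pcaPolynomial (hd : 2 ≤ d) (p : (Fin (d - 2) → ℂ) × ℂ) :
    (pcaPolynomial d p).derivative = X * ∏ i, (X - C (p.1 i)) := by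
  obtain ⟨m, rfl⟩ := Nat.exists_eq_add_of_le' hd
  rw [prod_X_sub_C_eq_sum_monomial, pcaPolynomial, Finset.sum_Ico_eq_sum_range, derivative_add,
    derivative_C, add_zero, derivative_sum, Finset.mul_sum]
  refine Finset.sum_congr (by congr 1) fun k _ => ?_
  have hk : ((2 + k : ℕ) : ℂ) ≠ 0 := Nat.cast_ne_zero.2 (by omega)
  have hsub : m + 2 - (2 + k) = m + 2 - 2 - k := Nat.sub_add_eq _ _ _
  rw [derivative_monomial, X_mul_monomial, div_mul_cancel₀ _ hk, hsub, Nat.add_comm 2 k,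
    Nat.add_succ_sub_one]

theorem natDegree_pcaPolynomial (hd : 2 ≤ d) (p : (Fin (d - 2) → ℂ) × ℂ) :
    (pcaPolynomial d p).natDegree = d := by
  have h := congrArg natDegree (derivative_pcaPolynomial hd p)
  have hmonic := monic_prod_X_sub_C p.1 Finset.univ
  rw [natDegree_derivative, natDegree_X_mul hmonic.ne_zero,
    natDegree_prod_of_monic _ _ fun i _ => monic_X_sub_C (p.1 i)] at h
  simp only [natDegree_sub_C, natDegree_X, Finset.sum_const, Finset.card_univ, Fintype.card_fin,
    smul_eq_mul, mul_one] at h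
  omega

theorem isHolomorphicFamily_pcaPolynomial (hd : 2 ≤ d) :
    IsHolomorphicFamily (pcaPolynomial d) d where
  natDegree_eq := natDegree_pcaPolynomial hd
  differentiable_coeff k := by
    simp only [pcaPolynomial, coeff_add, finsetSum_coeff, coeff_monomial, coeff_C]
    refine (Differentiable.fun_sum fun j _ => ?_).add ?_
    · split_ifs <;> fun_prop
    · split_ifs <;> fun_prop

theorem exists_critPt_eq_iff (hd : 2 ≤ d) (c : Fin (d - 2) → ℂ) (z : ℂ) :
    (∃ i : Fin (d - 1), critPt c i = z) ↔ z = 0 ∨ ∃ i, c i = z := by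
  constructor
  · rintro ⟨i, rfl⟩
    unfold critPt
    split_ifs with h
    · exact Or.inl rfl
    · exact Or.inr ⟨_, rfl⟩
  · rintro (rfl | ⟨i, rfl⟩)
    · exact ⟨⟨0, by omega⟩, by simp [critPt]⟩
    · exact ⟨⟨i + 1, by omega⟩, by simp [critPt]⟩

theorem isCriticalMarking_critPt (hd : 2 ≤ d) :
    IsCriticalMarking (pcaPolynomial d) fun (i : Fin (d - 1)) p => critPt p.1 i where
  differentiable i := by
    unfold critPt
    split_ifs <;> fun_prop
  eval_derivative_eq_zero_iff p z := by
    rw [exists_critPt_eq_iff hd, derivative_pcaPolynomial hd, eval_mul, eval_X, eval_prod,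
      mul_eq_zero, Finset.prod_eq_zero_iff]
    simp only [eval_sub, eval_X, eval_C, sub_eq_zero, Finset.mem_univ, true_and, eq_comm (a := z)]

theorem boundedCriticalLocus_pcaPolynomial (hd : 2 ≤ d) :
    boundedCriticalLocus (pcaPolynomial d) = connLocus d := by
  ext p
  simp only [boundedCriticalLocus, connLocus, boundedOrbit, mem_ofPred_eq,
    (isCriticalMarking_critPt hd).eval_derivative_eq_zero_iff, eval_pcaPolynomial hd,
    forall_exists_index, forall_apply_eq_imp_iff]

theorem mem_nonRepellingLocus_pcaPolynomial (hd : 2 ≤ d) {n : ℕ} {p : (Fin (d - 2) → ℂ) × ℂ} :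
    p ∈ nonRepellingLocus (pcaPolynomial d) n ↔
      ∃ z, (Pca d p.1 p.2)^[n] z = z ∧ ‖deriv ((Pca d p.1 p.2)^[n]) z‖ ≤ 1 := by
  simp only [← eval_pcaPolynomial hd p, deriv_iterate_eval, ← eval_iterComp, nonRepellingLocus,
    multipliers, mem_ofPred_eq, exists_exists_and_eq_and]

end PcaPolynomial

end

/-- If a connected component `U` of the interior of the connectedness locus contains a
parameter with a non-repelling cycle, then every parameter in the closure of `U` (in
particular on its boundary) has a non-repelling periodic point. -/
theorem stmt8 (d : ℕ) (hd : 3 ≤ d) (U : Set ((Fin (d - 2) → ℂ) × ℂ))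
    (hU : ∃ p ∈ interior (connLocus d), U = connectedComponentIn (interior (connLocus d)) p)
    (hnr : ∃ p ∈ U, ∃ z : ℂ, ∃ n : ℕ, 1 ≤ n ∧ (Pca d p.1 p.2)^[n] z = z ∧
      ‖deriv ((Pca d p.1 p.2)^[n]) z‖ ≤ 1) :
    ∀ p ∈ closure U, ∃ z₀ : ℂ, ∃ m : ℕ, 1 ≤ m ∧ (Pca d p.1 p.2)^[m] z₀ = z₀ ∧
      ‖deriv ((Pca d p.1 p.2)^[m]) z₀‖ ≤ 1 := by
  have hd₂ : 2 ≤ d := by omega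
  obtain ⟨p₀, -, rfl⟩ := hU
  obtain ⟨p₁, hp₁, z, n, hn, hz⟩ := hnr
  intro p hp
  obtain ⟨z₀, hz₀⟩ := (mem_nonRepellingLocus_pcaPolynomial hd₂).1 <|
    stmt8_general hd₂ (isHolomorphicFamily_pcaPolynomial hd₂) (isCriticalMarking_critPt hd₂)
      (Nat.one_le_iff_ne_zero.1 hn) isPreconnected_connectedComponentIn
      ((boundedCriticalLocus_pcaPolynomial hd₂).symm ▸ connectedComponentIn_subset _ _)
      ⟨p₁, hp₁, (mem_nonRepellingLocus_pcaPolynomial hd₂).2 ⟨z, hz⟩⟩ hp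
  exact ⟨z₀, n, hn, hz₀⟩
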